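/- arXiv:2105.02135 — 2 statements merged into one kernel-verified Lean document; each statement's English description precedes it below -/
import Mathlib

section
/- There exists an absolute constant C such that for every dimension d ≥ 1, every integer N ≥ 2 and every δ ∈ (0, 1/2), if X_1, …, X_N are i.i.d. uniformly distributed on [0,1]^d, then with probability at least 1−δ one has ρ(X_N, X) ≤ C √d ( log(1/δ) · log N / N )^{1/d}. -/
open MeasureTheory

/-- The unit cube `[0,1]^d` in Euclidean space. -/
def unitCube (d : ℕ) : Set (EuclideanSpace ℝ (Fin d)) :=
  {y | ∀ i, y i ∈ Set.Icc (0 : ℝ) 1}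

/-- The uniform distribution on `[0,1]^d` (normalized Lebesgue measure). -/
noncomputable def uniformCube (d : ℕ) : Measure (EuclideanSpace ℝ (Fin d)) :=
  volume.restrict (unitCube d)

/-- The covering radius `ρ(X_N, X) = sup_{x ∈ [0,1]^d} min_{k ≤ N} ‖x - X_k‖`. -/
noncomputable def cubeCovRad (d : ℕ) {N : ℕ} (xs : Fin N → EuclideanSpace ℝ (Fin d)) : ℝ :=
  ⨆ x : unitCube d, ⨅ k : Fin N, dist (x : EuclideanSpace ℝ (Fin d)) (xs k)

/-! Cut the cube into `m ^ d` congruent cells of side `1 / m` and diameter `√d / m`. If every cell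
contains a sample point, the covering radius is at most `√d / m`. A given cell is missed by all `N`
samples with probability `(1 - m⁻ᵈ) ^ N`, so by the union bound some cell is missed with probability
at most `m ^ d * (1 - m⁻ᵈ) ^ N ≤ m ^ d * exp (-N / m ^ d)`. This is at most `δ` as soon as
`m ^ d ≤ N / (4 log (1/δ) log N)`, and the largest such `m` gives the claimed radius. When there is
no such `m ≥ 1`, the trivial grid `m = 1` suffices. -/

section Sampling

variable {Ω ι κ : Type*} [MeasurableSpace Ω] [Fintype ι] [Fintype κ]

lemma measureReal_pi_forall_notMem (μ : Measure Ω) [SigmaFinite μ] (A : Set Ω) :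
    (Measure.pi fun _ : κ => μ).real {xs | ∀ k, xs k ∉ A} = μ.real Aᶜ ^ Fintype.card κ := by
  have avoid_eq_pi : {xs : κ → Ω | ∀ k, xs k ∉ A} = Set.univ.pi fun _ => Aᶜ := by
    ext xs
    simp
  rw [avoid_eq_pi, measureReal_def, Measure.pi_pi, Finset.prod_const, ENNReal.toReal_pow,
    Finset.card_univ, measureReal_def]

lemma one_sub_card_mul_pow_le_measureReal_pi_forall_exists_mem {μ : Measure Ω}
    [IsProbabilityMeasure μ] {A : ι → Set Ω} {q : ℝ} (hA : ∀ i, μ.real (A i)ᶜ ≤ q) :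
    1 - Fintype.card ι * q ^ Fintype.card κ ≤
      (Measure.pi fun _ : κ => μ).real {xs | ∀ i, ∃ k, xs k ∈ A i} := by
  set P := Measure.pi fun _ : κ => μ
  set hit : Set (κ → Ω) := {xs | ∀ i, ∃ k, xs k ∈ A i}
  have compl_hit : hitᶜ = ⋃ i, {xs | ∀ k, xs k ∉ A i} := by
    ext xs
    simp [hit]
  have miss_le : P.real hitᶜ ≤ Fintype.card ι * q ^ Fintype.card κ :=
    calc P.real hitᶜ ≤ ∑ i, P.real {xs | ∀ k, xs k ∉ A i} := by
          rw [compl_hit]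
          exact measureReal_iUnion_fintype_le _
      _ = ∑ i, μ.real (A i)ᶜ ^ Fintype.card κ := by
          simp only [P, measureReal_pi_forall_notMem]
      _ ≤ ∑ _i : ι, q ^ Fintype.card κ := by
          gcongr with i
          exact hA i
      _ = Fintype.card ι * q ^ Fintype.card κ := by
          rw [Finset.sum_const, Finset.card_univ, nsmul_eq_mul]
  have one_le : 1 ≤ P.real hit + P.real hitᶜ := by
    simpa only [Set.union_compl_self, probReal_univ] using measureReal_union_le (μ := P) hit hitᶜ
  linarith

end Sampling

section Grid

variable {ι : Type*}

/-- The closed cell with multi-index `c` in the grid that cuts `[0,1]^ι` into cubes of side `1 / m`.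
Neighbouring cells share their faces. -/
def gridCell (m : ℕ) (c : ι → Fin m) : Set (EuclideanSpace ℝ ι) :=
  WithLp.ofLp ⁻¹' Set.Icc (fun i => ((c i : ℕ) : ℝ) / m) (fun i => (((c i : ℕ) : ℝ) + 1) / m)

lemma mem_gridCell {m : ℕ} {c : ι → Fin m} {x : EuclideanSpace ℝ ι} :
    x ∈ gridCell m c ↔
      ∀ i, x i ∈ Set.Icc (((c i : ℕ) : ℝ) / m) ((((c i : ℕ) : ℝ) + 1) / m) := by
  simp only [gridCell, Set.mem_preimage, Set.mem_Icc, Pi.le_def, forall_and]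

lemma exists_fin_mem_Icc_div {m : ℕ} (hm : m ≠ 0) {x : ℝ} (hx : x ∈ Set.Icc (0 : ℝ) 1) :
    ∃ j : Fin m, x ∈ Set.Icc (((j : ℕ) : ℝ) / m) ((((j : ℕ) : ℝ) + 1) / m) := by
  have hm_pos : (0 : ℝ) < m := by positivity
  simp only [Set.mem_Icc, div_le_iff₀ hm_pos, le_div_iff₀ hm_pos]
  rcases hx.2.lt_or_eq with x_lt_one | rfl
  · have xm_nonneg : 0 ≤ x * m := mul_nonneg hx.1 hm_pos.le
    have floor_lt : ⌊x * m⌋₊ < m :=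
      (Nat.floor_lt xm_nonneg).2 (mul_lt_of_lt_one_left hm_pos x_lt_one)
    exact ⟨⟨_, floor_lt⟩, Nat.floor_le xm_nonneg, (Nat.lt_floor_add_one _).le⟩
  · obtain ⟨n, rfl⟩ := Nat.exists_eq_succ_of_ne_zero hm
    exact ⟨Fin.last n, by simp⟩

lemma measurableSet_gridCell [Countable ι] (m : ℕ) (c : ι → Fin m) :
    MeasurableSet (gridCell m c) :=
  WithLp.measurable_ofLp 2 (ι → ℝ) measurableSet_Icc

variable [Fintype ι]

lemma volume_real_gridCell (m : ℕ) (c : ι → Fin m) :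
    volume.real (gridCell m c) = ((m : ℝ) ^ Fintype.card ι)⁻¹ := by
  rw [gridCell, measureReal_def, (PiLp.volume_preserving_ofLp ι).measure_preimage
      measurableSet_Icc.nullMeasurableSet,
    Real.volume_Icc_pi_toReal fun i => by gcongr; exact (lt_add_one _).le]
  simp only [← sub_div, add_sub_cancel_left, one_div, Finset.prod_const, Finset.card_univ, inv_pow]

lemma euclidean_dist_le_sqrt_card_mul {x y : EuclideanSpace ℝ ι} {r : ℝ} (hr : 0 ≤ r)
    (h : ∀ i, dist (x i) (y i) ≤ r) : dist x y ≤ √(Fintype.card ι) * r :=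
  calc dist x y ≤ √(Fintype.card ι) * dist x.ofLp y.ofLp := by
        simpa [Real.sqrt_eq_rpow] using
          (PiLp.antilipschitzWith_ofLp 2 fun _ : ι => ℝ).le_mul_dist x y
    _ ≤ √(Fintype.card ι) * r := by
        gcongr
        exact (dist_pi_le_iff hr).2 h

lemma dist_le_of_mem_gridCell {m : ℕ} {c : ι → Fin m} {x y : EuclideanSpace ℝ ι}
    (hx : x ∈ gridCell m c) (hy : y ∈ gridCell m c) :
    dist x y ≤ √(Fintype.card ι) * (m : ℝ)⁻¹ := by
  refine euclidean_dist_le_sqrt_card_mul (by positivity) fun i => ?_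
  calc dist (x i) (y i) ≤ (((c i : ℕ) : ℝ) + 1) / m - ((c i : ℕ) : ℝ) / m :=
        Real.dist_le_of_mem_Icc (mem_gridCell.1 hx i) (mem_gridCell.1 hy i)
    _ = (m : ℝ)⁻¹ := by ring

end Grid

section Cube

variable {d : ℕ}

lemma unitCube_eq_gridCell_one (d : ℕ) : unitCube d = gridCell 1 0 := by
  ext x
  simp [unitCube, mem_gridCell]

instance isProbabilityMeasure_uniformCube (d : ℕ) : IsProbabilityMeasure (uniformCube d) := by
  rw [isProbabilityMeasure_iff_real, uniformCube, measureReal_restrict_apply_univ,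
    unitCube_eq_gridCell_one, volume_real_gridCell, Nat.cast_one, one_pow, inv_one]

lemma gridCell_subset_unitCube (m : ℕ) (c : Fin d → Fin m) : gridCell m c ⊆ unitCube d := by
  intro x hx i
  obtain ⟨lower, upper⟩ := mem_gridCell.1 hx i
  have index_succ_le : ((c i : ℕ) : ℝ) + 1 ≤ m := by exact_mod_cast (c i).isLt
  exact ⟨(by positivity : (0 : ℝ) ≤ _).trans lower,
    upper.trans (div_le_one_of_le₀ index_succ_le m.cast_nonneg)⟩

lemma exists_mem_gridCell {m : ℕ} (hm : m ≠ 0) {x : EuclideanSpace ℝ (Fin d)}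
    (hx : x ∈ unitCube d) : ∃ c : Fin d → Fin m, x ∈ gridCell m c := by
  choose c hc using fun i => exists_fin_mem_Icc_div hm (hx i)
  exact ⟨c, mem_gridCell.2 hc⟩

lemma uniformCube_real_compl_gridCell (m : ℕ) (c : Fin d → Fin m) :
    (uniformCube d).real (gridCell m c)ᶜ = 1 - ((m : ℝ) ^ d)⁻¹ := by
  rw [probReal_compl_eq_one_sub (measurableSet_gridCell m c), uniformCube,
    measureReal_restrict_apply (measurableSet_gridCell m c),
    Set.inter_eq_left.2 (gridCell_subset_unitCube m c), volume_real_gridCell, Fintype.card_fin]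

lemma cubeCovRad_le {N : ℕ} {xs : Fin N → EuclideanSpace ℝ (Fin d)} {r : ℝ}
    (h : ∀ x ∈ unitCube d, ∃ k, dist x (xs k) ≤ r) : cubeCovRad d xs ≤ r := by
  have : Nonempty (unitCube d) := ⟨0, fun _ => by simp⟩
  refine ciSup_le fun x => ?_
  obtain ⟨k, hk⟩ := h x x.2
  exact (ciInf_le ⟨0, Set.forall_mem_range.2 fun _ => dist_nonneg⟩ k).trans hk

lemma cubeCovRad_le_of_forall_gridCell {m N : ℕ} (hm : m ≠ 0)
    {xs : Fin N → EuclideanSpace ℝ (Fin d)} (h : ∀ c : Fin d → Fin m, ∃ k, xs k ∈ gridCell m c) :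
    cubeCovRad d xs ≤ √d * (m : ℝ)⁻¹ := by
  refine cubeCovRad_le fun x hx => ?_
  obtain ⟨c, hxc⟩ := exists_mem_gridCell hm hx
  obtain ⟨k, hkc⟩ := h c
  exact ⟨k, by simpa only [Fintype.card_fin] using dist_le_of_mem_gridCell hxc hkc⟩

lemma one_sub_le_measureReal_cubeCovRad_le {m : ℕ} (hm : m ≠ 0) (d N : ℕ) :
    1 - (m : ℝ) ^ d * (1 - ((m : ℝ) ^ d)⁻¹) ^ N ≤
      (Measure.pi fun _ : Fin N => uniformCube d).real
        {xs | cubeCovRad d xs ≤ √d * (m : ℝ)⁻¹} :=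
  calc 1 - (m : ℝ) ^ d * (1 - ((m : ℝ) ^ d)⁻¹) ^ N
      ≤ (Measure.pi fun _ : Fin N => uniformCube d).real
          {xs | ∀ c : Fin d → Fin m, ∃ k, xs k ∈ gridCell m c} := by
        simpa using one_sub_card_mul_pow_le_measureReal_pi_forall_exists_mem (κ := Fin N)
          fun c : Fin d → Fin m => (uniformCube_real_compl_gridCell m c).le
    _ ≤ _ := measureReal_mono fun _ => cubeCovRad_le_of_forall_gridCell hm

end Cube

section Estimates

lemma half_le_log_of_two_le {x : ℝ} (hx : 2 ≤ x) : 1 / 2 ≤ Real.log x :=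
  calc (1 : ℝ) / 2 ≤ Real.log 2 := by linarith [Real.log_two_gt_d9]
    _ ≤ Real.log x := Real.log_le_log two_pos hx

lemma one_sub_inv_pow_le_exp_neg_div {K : ℝ} (hK : 1 ≤ K) (N : ℕ) :
    (1 - K⁻¹) ^ N ≤ Real.exp (-(N / K)) :=
  calc (1 - K⁻¹) ^ N ≤ Real.exp (-K⁻¹) ^ N := by
        gcongr
        · exact sub_nonneg.2 (inv_le_one_of_one_le₀ hK)
        · exact Real.one_sub_le_exp_neg _
    _ = Real.exp (-(N / K)) := by
        rw [← Real.exp_nat_mul]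
        ring_nf

lemma mul_one_sub_inv_pow_le {K δ : ℝ} {N : ℕ} (hK : 1 ≤ K) (hN : 2 ≤ N) (hδ : 0 < δ)
    (hδ_le : δ ≤ 1 / 2) (hKN : 4 * (Real.log (1 / δ) * Real.log N) * K ≤ N) :
    K * (1 - K⁻¹) ^ N ≤ δ := by
  set L := Real.log (1 / δ) with L_def
  set a := Real.log N
  have half_le_L : 1 / 2 ≤ L :=
    half_le_log_of_two_le ((le_div_iff₀ hδ).2 (by linarith))
  have half_le_a : 1 / 2 ≤ a := half_le_log_of_two_le (by exact_mod_cast hN)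
  have add_le : L + a ≤ 4 * (L * a) := by nlinarith
  have exp_a : Real.exp a = N := Real.exp_log (by positivity)
  have exp_neg_L : Real.exp (-L) = δ := by
    rw [L_def, one_div, Real.log_inv, neg_neg, Real.exp_log hδ]
  have K_le : K ≤ N := (le_mul_of_one_le_left (by linarith) (by linarith)).trans hKN
  have le_div : 4 * (L * a) ≤ N / K := (le_div_iff₀ (by linarith)).2 hKN
  calc K * (1 - K⁻¹) ^ N ≤ N * Real.exp (-(N / K)) :=
        mul_le_mul K_le (one_sub_inv_pow_le_exp_neg_div hK N)
          (pow_nonneg (sub_nonneg.2 (inv_le_one_of_one_le₀ hK)) N) N.cast_nonneg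
    _ = Real.exp (a - N / K) := by rw [← exp_a, ← Real.exp_add, sub_eq_add_neg]
    _ ≤ Real.exp (-L) := Real.exp_le_exp.2 (by linarith)
    _ = δ := exp_neg_L

lemma exists_nat_inv_le_two_mul_rpow {d : ℕ} (hd : d ≠ 0) {t : ℝ} (ht : 0 < t) :
    ∃ m : ℕ, m ≠ 0 ∧ (m : ℝ)⁻¹ ≤ 2 * t ^ (1 / (d : ℝ)) ∧ (m = 1 ∨ t * (m : ℝ) ^ d ≤ 1) := by
  set u := t ^ (1 / (d : ℝ)) with u_def
  have u_pos : 0 < u := by positivity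
  have u_pow : u ^ d = t := by
    rw [u_def, one_div, Real.rpow_inv_natCast_pow ht.le hd]
  rcases le_total 1 u with one_le_u | u_le_one
  · exact ⟨1, one_ne_zero, by norm_num; linarith, Or.inl rfl⟩
  · set m := ⌊u⁻¹⌋₊
    have one_le_m : 1 ≤ m := Nat.le_floor (by simpa using (one_le_inv₀ u_pos).2 u_le_one)
    have one_le_m' : (1 : ℝ) ≤ m := by exact_mod_cast one_le_m
    have m_le : (m : ℝ) ≤ u⁻¹ := Nat.floor_le (by positivity)
    have inv_u_le : u⁻¹ ≤ 2 * m := by linarith [Nat.lt_floor_add_one u⁻¹]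
    refine ⟨m, by omega, ?_, Or.inr ?_⟩
    · rw [inv_le_iff_one_le_mul₀ (by positivity)]
      rw [inv_le_iff_one_le_mul₀ u_pos] at inv_u_le
      linarith
    · rw [← u_pow, ← mul_pow]
      exact pow_le_one₀ (by positivity) ((le_inv_mul_iff₀ u_pos).1 (by simpa using m_le))

lemma mul_rpow_one_div_natCast_le (d : ℕ) {c t : ℝ} (hc : 1 ≤ c) (ht : 0 ≤ t) :
    (c * t) ^ (1 / (d : ℝ)) ≤ c * t ^ (1 / (d : ℝ)) := by
  rw [Real.mul_rpow (by positivity) ht]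
  gcongr
  exact Real.rpow_le_self_of_one_le hc (by simpa using Nat.cast_inv_le_one d)

lemma exists_nat_inv_le_rpow_and_pow_mul_le {d N : ℕ} {δ : ℝ} (hd : d ≠ 0) (hN : 2 ≤ N)
    (hδ : 0 < δ) (hδ_le : δ ≤ 1 / 2) :
    ∃ m : ℕ, m ≠ 0 ∧
      (m : ℝ)⁻¹ ≤ 8 * (Real.log (1 / δ) * Real.log N / N) ^ (1 / (d : ℝ)) ∧
      (m : ℝ) ^ d * (1 - ((m : ℝ) ^ d)⁻¹) ^ N ≤ δ := by
  set t := Real.log (1 / δ) * Real.log N / N with t_def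
  have N_pos : (0 : ℝ) < N := by positivity
  have t_pos : 0 < t := by
    have log_N_pos : 0 < Real.log N := Real.log_pos (by exact_mod_cast hN)
    have log_inv_pos : 0 < Real.log (1 / δ) := Real.log_pos ((one_lt_div hδ).2 (by linarith))
    positivity
  obtain ⟨m, hm, side_le, grid_small⟩ :=
    exists_nat_inv_le_two_mul_rpow hd (by positivity : 0 < 4 * t)
  have root_le : (4 * t) ^ (1 / (d : ℝ)) ≤ 4 * t ^ (1 / (d : ℝ)) :=
    mul_rpow_one_div_natCast_le d (by norm_num) t_pos.le
  refine ⟨m, hm, by linarith, ?_⟩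
  rcases grid_small with rfl | grid_small
  · simpa [zero_pow (by omega : N ≠ 0)] using hδ.le
  · have one_le_m : (1 : ℝ) ≤ m := by exact_mod_cast Nat.one_le_iff_ne_zero.2 hm
    refine mul_one_sub_inv_pow_le (one_le_pow₀ one_le_m) hN hδ hδ_le ?_
    calc 4 * (Real.log (1 / δ) * Real.log N) * (m : ℝ) ^ d = N * (4 * t * (m : ℝ) ^ d) := by
          rw [t_def]
          field_simp
      _ ≤ N := mul_le_of_le_one_right N_pos.le grid_small

end Estimates

/-- there is an absolute constant `C` such that for every `d ≥ 1`, `N ≥ 2`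
and `δ ∈ (0,1/2)`, for i.i.d. uniform points on the cube, with probability at least
`1 - δ` one has `ρ(X_N,X) ≤ C √d (log(1/δ) log N / N)^{1/d}`. -/
theorem stmt_7 :
    ∃ C : ℝ, 0 < C ∧ ∀ (d N : ℕ), 1 ≤ d → 2 ≤ N → ∀ δ : ℝ, 0 < δ → δ < 1 / 2 →
      ENNReal.ofReal (1 - δ) ≤
        (Measure.pi fun _ : Fin N => uniformCube d)
          {xs : Fin N → EuclideanSpace ℝ (Fin d) |
            cubeCovRad d xs ≤
              C * Real.sqrt d * (Real.log (1 / δ) * Real.log N / N) ^ (1 / (d : ℝ))} := by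
  refine ⟨8, by norm_num, fun d N hd hN δ hδ hδ_lt => ENNReal.ofReal_le_of_le_toReal ?_⟩
  obtain ⟨m, hm, side_le, miss_le⟩ :=
    exists_nat_inv_le_rpow_and_pow_mul_le (Nat.one_le_iff_ne_zero.1 hd) hN hδ hδ_lt.le
  calc 1 - δ ≤ 1 - (m : ℝ) ^ d * (1 - ((m : ℝ) ^ d)⁻¹) ^ N := by linarith
    _ ≤ (Measure.pi fun _ : Fin N => uniformCube d).real
          {xs | cubeCovRad d xs ≤ √d * (m : ℝ)⁻¹} := one_sub_le_measureReal_cubeCovRad_le hm d N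
    _ ≤ _ := measureReal_mono fun xs (hxs : cubeCovRad d xs ≤ √d * (m : ℝ)⁻¹) =>
        hxs.trans <| by
          rw [mul_comm 8, mul_assoc]
          gcongr
end

section
/- The UVIP iterates satisfy ‖V_k^{up} − V*‖_∞ ≤ γ^k ‖V_0^{up} − V*‖_∞ + 2γ(1−γ)^{−1} ‖V^π − V*‖_∞ for every k ∈ ℕ, and the unique bounded measurable fixed point V^{up} of the UVIP operator satisfies ‖V^{up} − V^π‖_∞ ≤ ( 1 + 2γ(1−γ)^{−1} ) ‖V* − V^π‖_∞. -/
open MeasureTheory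

/-!
Write `E = ‖V^π - V*‖_∞`. For fixed `x`, `ξ` and each action, the quantity maximised by the UVIP
operator differs from the one maximised in `V* = T V*` by at most `γ (‖V - V*‖_∞ + 2 E)`: one `E`
comes from `V^π (ψ x a ξ)`, the other from its mean `P^a V^π x`. Suprema and means do not increase
such errors, so one UVIP step turns the distance `d` to `V*` into at most `γ d + 2 γ E`. Iterating
this affine contraction gives the bound on the iterates; at a fixed point it reads
`d ≤ γ d + 2 γ E`, and the triangle inequality through `V*` concludes.
-/

theorem abs_ciSup_sub_ciSup_le {ι : Type*} [Nonempty ι] {f g : ι → ℝ} {C : ℝ}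
    (hg : BddAbove (Set.range g)) (hfg : ∀ i, |f i - g i| ≤ C) :
    |(⨆ i, f i) - ⨆ i, g i| ≤ C := by
  have hf_le : ∀ i, f i ≤ (⨆ i, g i) + C := fun i => by
    linarith [(abs_le.1 (hfg i)).2, le_ciSup hg i]
  have hf : BddAbove (Set.range f) := ⟨_, Set.forall_mem_range.2 hf_le⟩
  have hg_le : ∀ i, g i ≤ (⨆ i, f i) + C := fun i => by
    linarith [(abs_le.1 (hfg i)).1, le_ciSup hf i]
  rw [abs_sub_le_iff]
  constructor
  · linarith [ciSup_le hf_le]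
  · linarith [ciSup_le hg_le]

theorem norm_integral_sub_integral_le_of_norm_sub_le {Ω E : Type*} [MeasurableSpace Ω]
    [NormedAddCommGroup E] [NormedSpace ℝ E] {μ : Measure Ω} [IsProbabilityMeasure μ]
    {f g : Ω → E} {C : ℝ} (hf : AEStronglyMeasurable f μ) (hg : Integrable g μ)
    (hfg : ∀ ω, ‖f ω - g ω‖ ≤ C) :
    ‖(∫ ω, f ω ∂μ) - ∫ ω, g ω ∂μ‖ ≤ C := by
  have hfg_int : Integrable (fun ω => f ω - g ω) μ :=
    .of_bound (hf.sub hg.aestronglyMeasurable) C (.of_forall hfg)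
  have hf_int : Integrable f μ := (hfg_int.add hg).congr (.of_forall fun _ => sub_add_cancel _ _)
  rw [← integral_sub hf_int hg]
  simpa using norm_integral_le_of_norm_le_const (μ := μ) (.of_forall hfg)

theorem le_pow_mul_add_div_of_le_mul_add {d : ℕ → ℝ} {γ c : ℝ} (hγ0 : 0 ≤ γ) (hγ1 : γ < 1)
    (hc : 0 ≤ c) (hd : ∀ k, d (k + 1) ≤ γ * d k + c) (k : ℕ) :
    d k ≤ γ ^ k * d 0 + c / (1 - γ) := by
  -- Subtracting the fixed point `c / (1 - γ)` of `t ↦ γ t + c` makes the recursion linear.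
  set t := c / (1 - γ)
  have ht : γ * t + c = t := by
    have : 1 - γ ≠ 0 := by linarith
    simp only [t]
    field_simp
    ring
  have ht0 : 0 ≤ t := div_nonneg hc (by linarith)
  have hgeom : d k - t ≤ γ ^ k * (d 0 - t) :=
    le_geom (u := fun k => d k - t) hγ0 k fun j _ => by linarith [hd j]
  linarith [mul_nonneg (pow_nonneg hγ0 k) ht0]

/-- Bounded measurable real functions on the state space: the class of value functions. -/
structure IsBoundedMeasurable {X : Type*} [MeasurableSpace X] (V : X → ℝ) : Prop where
  measurable : Measurable V
  bounded : ∃ B : ℝ, ∀ x, |V x| ≤ B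

/-- The distance `‖V - W‖_∞` for the supremum norm, as a real number: it has the junk value `0`
when `V - W` is unbounded. -/
noncomputable def supDist {X : Type*} (V W : X → ℝ) : ℝ :=
  ⨆ x, |V x - W x|

section SupDist

variable {X : Type*} {U V W : X → ℝ}

theorem supDist_nonneg : 0 ≤ supDist V W :=
  Real.iSup_nonneg fun _ => abs_nonneg _

theorem supDist_comm (V W : X → ℝ) : supDist V W = supDist W V := by
  simp only [supDist, abs_sub_comm]

theorem supDist_le {C : ℝ} (hC : 0 ≤ C) (h : ∀ x, |V x - W x| ≤ C) : supDist V W ≤ C :=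
  Real.iSup_le h hC

theorem abs_sub_le_supDist (hV : ∃ B : ℝ, ∀ x, |V x| ≤ B) (hW : ∃ B : ℝ, ∀ x, |W x| ≤ B)
    (x : X) : |V x - W x| ≤ supDist V W := by
  obtain ⟨B, hB⟩ := hV
  obtain ⟨C, hC⟩ := hW
  have hbdd : BddAbove (Set.range fun x => |V x - W x|) :=
    ⟨B + C, Set.forall_mem_range.2 fun y => (abs_sub _ _).trans (add_le_add (hB y) (hC y))⟩
  exact le_ciSup hbdd x

theorem supDist_triangle (hU : ∃ B : ℝ, ∀ x, |U x| ≤ B) (hV : ∃ B : ℝ, ∀ x, |V x| ≤ B)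
    (hW : ∃ B : ℝ, ∀ x, |W x| ≤ B) : supDist U W ≤ supDist U V + supDist V W :=
  supDist_le (add_nonneg supDist_nonneg supDist_nonneg) fun x =>
    (abs_sub_le _ (V x) _).trans
      (add_le_add (abs_sub_le_supDist hU hV x) (abs_sub_le_supDist hV hW x))

end SupDist

section Operators

variable {X A Ξ : Type*} [MeasurableSpace Ξ]

/-- The Bellman optimality operator `T`, with the mean `P^a V` written as an integral over the
noise `ξ`. The maximum over actions is a supremum, which is meaningful only where the family is
bounded above. -/
noncomputable def bellmanOp (P : Measure Ξ) (ψ : X → A → Ξ → X) (r : A → X → ℝ) (γ : ℝ)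
    (V : X → ℝ) (x : X) : ℝ :=
  ⨆ a, (r a x + γ * ∫ ξ, V (ψ x a ξ) ∂P)

/-- The integrand of the UVIP operator: the maximum over actions for a frozen noise `ξ`, where
`U` plays the role of `V^π` and enters through the centred term `P^a U x - U (ψ x a ξ)`. -/
noncomputable def uvipIntegrand (P : Measure Ξ) (ψ : X → A → Ξ → X) (r : A → X → ℝ) (γ : ℝ)
    (U V : X → ℝ) (x : X) (ξ : Ξ) : ℝ :=
  ⨆ a, (r a x + γ * (V (ψ x a ξ) - U (ψ x a ξ) + ∫ ξ', U (ψ x a ξ') ∂P))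

/-- The UVIP operator `V ↦ uvipOp P ψ r γ U V`, with `U` in the role of `V^π`. -/
noncomputable def uvipOp (P : Measure Ξ) (ψ : X → A → Ξ → X) (r : A → X → ℝ) (γ : ℝ)
    (U V : X → ℝ) (x : X) : ℝ :=
  ∫ ξ, uvipIntegrand P ψ r γ U V x ξ ∂P

variable {P : Measure Ξ} {ψ : X → A → Ξ → X} {r : A → X → ℝ} {γ : ℝ} {U V W : X → ℝ}

theorem bddAbove_range_reward_add_mul_integral [IsFiniteMeasure P] {x : X}
    (hr : BddAbove (Set.range fun a => r a x)) (hW : ∃ B : ℝ, ∀ x, |W x| ≤ B) :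
    BddAbove (Set.range fun a => r a x + γ * ∫ ξ, W (ψ x a ξ) ∂P) := by
  obtain ⟨R, hR⟩ := hr
  obtain ⟨B, hB⟩ := hW
  refine ⟨R + |γ| * (B * P.real Set.univ), Set.forall_mem_range.2 fun a => ?_⟩
  have hmean : |∫ ξ, W (ψ x a ξ) ∂P| ≤ B * P.real Set.univ :=
    norm_integral_le_of_norm_le_const (f := fun ξ => W (ψ x a ξ)) (.of_forall fun _ => hB _)
  calc r a x + γ * ∫ ξ, W (ψ x a ξ) ∂P
      ≤ r a x + |γ| * |∫ ξ, W (ψ x a ξ) ∂P| := by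
        rw [← abs_mul]
        gcongr
        exact le_abs_self _
    _ ≤ R + |γ| * (B * P.real Set.univ) := by
        gcongr
        exact hR ⟨a, rfl⟩

variable [MeasurableSpace X]

theorem IsBoundedMeasurable.integrable_comp [IsFiniteMeasure P] {f : Ξ → X}
    (hV : IsBoundedMeasurable V) (hf : Measurable f) : Integrable (fun ξ => V (f ξ)) P := by
  obtain ⟨B, hB⟩ := hV.bounded
  exact .of_bound (hV.measurable.comp hf).aestronglyMeasurable B (.of_forall fun _ => hB _)

theorem measurable_uvipIntegrand [SFinite P] [Countable A]
    (hψ : ∀ a, Measurable fun p : X × Ξ => ψ p.1 a p.2) (hr : ∀ a, Measurable (r a))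
    (hU : Measurable U) (hV : Measurable V) :
    Measurable fun p : X × Ξ => uvipIntegrand P ψ r γ U V p.1 p.2 := by
  refine Measurable.iSup fun a => ?_
  have hmean : Measurable fun x => ∫ ξ, U (ψ x a ξ) ∂P :=
    (hU.comp (hψ a)).stronglyMeasurable.integral_prod_right'.measurable
  exact ((hr a).comp measurable_fst).add
    ((((hV.comp (hψ a)).sub (hU.comp (hψ a))).add (hmean.comp measurable_fst)).const_mul γ)

theorem measurable_uvipOp [SFinite P] [Countable A]
    (hψ : ∀ a, Measurable fun p : X × Ξ => ψ p.1 a p.2) (hr : ∀ a, Measurable (r a))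
    (hU : Measurable U) (hV : Measurable V) : Measurable (uvipOp P ψ r γ U V) :=
  (measurable_uvipIntegrand hψ hr hU hV).stronglyMeasurable.integral_prod_right'.measurable

variable [IsProbabilityMeasure P] [Nonempty A]

theorem abs_uvipIntegrand_sub_bellmanOp_le {x : X} (hψ : ∀ a, Measurable (ψ x a))
    (hr : BddAbove (Set.range fun a => r a x)) (hγ : 0 ≤ γ) (hU : Measurable U)
    (hW : IsBoundedMeasurable W) {D E : ℝ} (hVW : ∀ y, |V y - W y| ≤ D)
    (hUW : ∀ y, |U y - W y| ≤ E) (ξ : Ξ) :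
    |uvipIntegrand P ψ r γ U V x ξ - bellmanOp P ψ r γ W x| ≤ γ * D + 2 * γ * E := by
  refine abs_ciSup_sub_ciSup_le (bddAbove_range_reward_add_mul_integral hr hW.bounded) fun a => ?_
  have hmean : |(∫ ξ', U (ψ x a ξ') ∂P) - ∫ ξ', W (ψ x a ξ') ∂P| ≤ E :=
    norm_integral_sub_integral_le_of_norm_sub_le (hU.comp (hψ a)).aestronglyMeasurable
      (hW.integrable_comp (hψ a)) fun ξ' => hUW (ψ x a ξ')
  set y := ψ x a ξ
  set mU := ∫ ξ', U (ψ x a ξ') ∂P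
  set mW := ∫ ξ', W (ψ x a ξ') ∂P
  calc |r a x + γ * (V y - U y + mU) - (r a x + γ * mW)|
      = |γ * ((V y - W y) - (U y - W y) + (mU - mW))| := by ring_nf
    _ = γ * |(V y - W y) - (U y - W y) + (mU - mW)| := by rw [abs_mul, abs_of_nonneg hγ]
    _ ≤ γ * (|V y - W y| + |U y - W y| + |mU - mW|) := by
        gcongr
        exact (abs_add_le _ _).trans (add_le_add_left (abs_sub _ _) _)
    _ ≤ γ * (D + E + E) := by gcongr; exacts [hVW y, hUW y]
    _ = γ * D + 2 * γ * E := by ring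

theorem abs_uvipOp_sub_bellmanOp_le [Countable A]
    (hψ : ∀ a, Measurable fun p : X × Ξ => ψ p.1 a p.2) (hr_meas : ∀ a, Measurable (r a))
    (hγ : 0 ≤ γ) (hU : Measurable U) (hV : Measurable V) (hW : IsBoundedMeasurable W) {D E : ℝ}
    (hVW : ∀ y, |V y - W y| ≤ D) (hUW : ∀ y, |U y - W y| ≤ E)
    {x : X} (hr : BddAbove (Set.range fun a => r a x)) :
    |uvipOp P ψ r γ U V x - bellmanOp P ψ r γ W x| ≤ γ * D + 2 * γ * E := by
  have hmeas : AEStronglyMeasurable (uvipIntegrand P ψ r γ U V x) P :=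
    ((measurable_uvipIntegrand hψ hr_meas hU hV).comp measurable_prodMk_left).aestronglyMeasurable
  have hψx : ∀ a, Measurable (ψ x a) := fun a => (hψ a).comp measurable_prodMk_left
  simpa [uvipOp] using norm_integral_sub_integral_le_of_norm_sub_le hmeas
    (integrable_const (bellmanOp P ψ r γ W x))
    (abs_uvipIntegrand_sub_bellmanOp_le hψx hr hγ hU hW hVW hUW)

theorem isBoundedMeasurable_uvipOp [Countable A]
    (hψ : ∀ a, Measurable fun p : X × Ξ => ψ p.1 a p.2) (hr_meas : ∀ a, Measurable (r a))
    (hr : ∀ x, BddAbove (Set.range fun a => r a x)) (hγ : 0 ≤ γ)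
    (hU : IsBoundedMeasurable U) (hV : IsBoundedMeasurable V) (hW : IsBoundedMeasurable W)
    (hTW : ∃ B : ℝ, ∀ x, |bellmanOp P ψ r γ W x| ≤ B) :
    IsBoundedMeasurable (uvipOp P ψ r γ U V) := by
  refine ⟨measurable_uvipOp hψ hr_meas hU.measurable hV.measurable, ?_⟩
  obtain ⟨B, hB⟩ := hTW
  refine ⟨γ * supDist V W + 2 * γ * supDist U W + B, fun x => ?_⟩
  have hstep := abs_uvipOp_sub_bellmanOp_le (P := P) hψ hr_meas hγ hU.measurable hV.measurable hW
    (abs_sub_le_supDist hV.bounded hW.bounded) (abs_sub_le_supDist hU.bounded hW.bounded) (hr x)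
  linarith [abs_sub_abs_le_abs_sub (uvipOp P ψ r γ U V x) (bellmanOp P ψ r γ W x), hB x]

theorem supDist_uvipOp_bellmanOp_le [Countable A]
    (hψ : ∀ a, Measurable fun p : X × Ξ => ψ p.1 a p.2) (hr_meas : ∀ a, Measurable (r a))
    (hr : ∀ x, BddAbove (Set.range fun a => r a x)) (hγ : 0 ≤ γ)
    (hU : IsBoundedMeasurable U) (hV : IsBoundedMeasurable V) (hW : IsBoundedMeasurable W) :
    supDist (uvipOp P ψ r γ U V) (bellmanOp P ψ r γ W) ≤
      γ * supDist V W + 2 * γ * supDist U W := by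
  have hVW : 0 ≤ supDist V W := supDist_nonneg
  have hUW : 0 ≤ supDist U W := supDist_nonneg
  exact supDist_le (by positivity) fun x =>
    abs_uvipOp_sub_bellmanOp_le hψ hr_meas hγ hU.measurable hV.measurable hW
      (abs_sub_le_supDist hV.bounded hW.bounded) (abs_sub_le_supDist hU.bounded hW.bounded) (hr x)

end Operators

theorem stmt_13_general {X A Ξ : Type*} [MeasurableSpace X] [Countable A] [Nonempty A]
    [MeasurableSpace Ξ] {P : Measure Ξ} [IsProbabilityMeasure P] {ψ : X → A → Ξ → X}
    (hψ : ∀ a, Measurable fun p : X × Ξ => ψ p.1 a p.2)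
    {r : A → X → ℝ} (hr_meas : ∀ a, Measurable (r a))
    (hr : ∀ x, BddAbove (Set.range fun a => r a x))
    {γ : ℝ} (hγ0 : 0 ≤ γ) (hγ1 : γ < 1)
    {Vstar : X → ℝ} (hVstar : IsBoundedMeasurable Vstar)
    (hVstar_fix : Vstar = bellmanOp P ψ r γ Vstar)
    {Vpi : X → ℝ} (hVpi : IsBoundedMeasurable Vpi)
    {Vup : ℕ → X → ℝ} (hV0 : IsBoundedMeasurable (Vup 0))
    (hrec : ∀ k, Vup (k + 1) = uvipOp P ψ r γ Vpi (Vup k))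
    {Vupfix : X → ℝ} (hVupfix : IsBoundedMeasurable Vupfix)
    (hfix : Vupfix = uvipOp P ψ r γ Vpi Vupfix) :
    (∀ k, supDist (Vup k) Vstar ≤
      γ ^ k * supDist (Vup 0) Vstar + 2 * γ / (1 - γ) * supDist Vpi Vstar) ∧
    supDist Vupfix Vpi ≤ (1 + 2 * γ / (1 - γ)) * supDist Vstar Vpi := by
  have hVup : ∀ k, IsBoundedMeasurable (Vup k) := fun k => by
    induction k with
    | zero => exact hV0
    | succ k ih =>
      rw [hrec]
      exact isBoundedMeasurable_uvipOp hψ hr_meas hr hγ0 hVpi ih hVstar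
        (hVstar_fix ▸ hVstar.bounded)
  have hstep : ∀ V, IsBoundedMeasurable V → supDist (uvipOp P ψ r γ Vpi V) Vstar ≤
      γ * supDist V Vstar + 2 * γ * supDist Vpi Vstar := fun V hV => by
    simpa only [← hVstar_fix] using
      supDist_uvipOp_bellmanOp_le (P := P) hψ hr_meas hr hγ0 hVpi hV hVstar
  have herr : 0 ≤ 2 * γ * supDist Vpi Vstar := mul_nonneg (by positivity) supDist_nonneg
  constructor
  · intro k
    rw [← mul_div_right_comm]
    exact le_pow_mul_add_div_of_le_mul_add (d := fun k => supDist (Vup k) Vstar) hγ0 hγ1 herr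
      (fun k => hrec k ▸ hstep _ (hVup k)) k
  · have hfix_le : supDist Vupfix Vstar ≤ 2 * γ / (1 - γ) * supDist Vstar Vpi := by
      have hself := hstep Vupfix hVupfix
      rw [← hfix] at hself
      rw [← mul_div_right_comm, le_div_iff₀ (by linarith), supDist_comm Vstar]
      linarith
    linarith [supDist_triangle hVupfix.bounded hVstar.bounded hVpi.bounded]

/-- geometric convergence of the UVIP iterates towards `V*` up to a
`2γ(1-γ)⁻¹ ‖V^π - V*‖` term, and the bound
`‖V^up - V^π‖ ≤ (1 + 2γ(1-γ)⁻¹) ‖V* - V^π‖` for the UVIP fixed point `V^up`. -/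
theorem stmt_13 {X A Ξ : Type*} [MeasurableSpace X] [MeasurableSpace A] [Nonempty X]
    [Fintype A] [Nonempty A] [MeasurableSpace Ξ]
    (P : Measure Ξ) [IsProbabilityMeasure P]
    (ψ : X → A → Ξ → X)
    (hψ : Measurable fun p : (X × A) × Ξ => ψ p.1.1 p.1.2 p.2)
    (r : A → X → ℝ) (hr_meas : ∀ a, Measurable (r a))
    (hr_bdd : ∀ a, ∃ B : ℝ, ∀ x, |r a x| ≤ B)
    (γ : ℝ) (hγ0 : 0 < γ) (hγ1 : γ < 1)
    (Vstar : X → ℝ) (hVstar_meas : Measurable Vstar)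
    (hVstar_bdd : ∃ B : ℝ, ∀ x, |Vstar x| ≤ B)
    (hVstar_fix : ∀ x, Vstar x = ⨆ a : A, (r a x + γ * ∫ ξ, Vstar (ψ x a ξ) ∂P))
    (Vpi : X → ℝ) (hVpi_meas : Measurable Vpi) (hVpi_bdd : ∃ B : ℝ, ∀ x, |Vpi x| ≤ B)
    -- the UVIP iterates
    (Vup : ℕ → X → ℝ)
    (hV0_meas : Measurable (Vup 0)) (hV0_bdd : ∃ B : ℝ, ∀ x, |Vup 0 x| ≤ B)
    (hrec : ∀ k x, Vup (k + 1) x =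
      ∫ ξ, (⨆ a : A, (r a x +
        γ * (Vup k (ψ x a ξ) - Vpi (ψ x a ξ) + ∫ ξ', Vpi (ψ x a ξ') ∂P))) ∂P)
    -- the fixed point of the UVIP operator
    (Vupfix : X → ℝ) (hfix_meas : Measurable Vupfix)
    (hfix_bdd : ∃ B : ℝ, ∀ x, |Vupfix x| ≤ B)
    (hfix : ∀ x, Vupfix x =
      ∫ ξ, (⨆ a : A, (r a x +
        γ * (Vupfix (ψ x a ξ) - Vpi (ψ x a ξ) + ∫ ξ', Vpi (ψ x a ξ') ∂P))) ∂P) :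
    (∀ k : ℕ, (⨆ x, |Vup k x - Vstar x|) ≤
      γ ^ k * (⨆ x, |Vup 0 x - Vstar x|) + 2 * γ / (1 - γ) * ⨆ x, |Vpi x - Vstar x|) ∧
    (⨆ x, |Vupfix x - Vpi x|) ≤ (1 + 2 * γ / (1 - γ)) * ⨆ x, |Vstar x - Vpi x| :=
  stmt_13_general
    (fun _ => hψ.comp ((measurable_fst.prodMk measurable_const).prodMk measurable_snd))
    hr_meas (fun _ => (Set.finite_range _).bddAbove) hγ0.le hγ1
    ⟨hVstar_meas, hVstar_bdd⟩ (funext hVstar_fix) ⟨hVpi_meas, hVpi_bdd⟩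
    ⟨hV0_meas, hV0_bdd⟩ (fun k => funext (hrec k)) ⟨hfix_meas, hfix_bdd⟩ (funext hfix)
end
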